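/- Let A and B be bounded self-adjoint operators on a Hilbert space and let σ and Δ be Borel subsets of ℝ. Then dist(σ, Δ)·‖E_A(σ)·E_B(Δ)‖ ≤ (π/2)·‖A − B‖. -/

import Mathlib

/-- `E` is the projection-valued spectral measure of the bounded self-adjoint operator `T`
on the complex Hilbert space `H`: each `E Δ` (for Borel `Δ ⊆ ℝ`) is an orthogonal
projection, `E` is multiplicative and countably additive (in the strong sense), `E ℝ = 1`,
each `E Δ` commutes with `T`, and on the range of `E Δ` the operator `T` has its
approximate point spectrum inside the closure of `Δ` (which uniquely characterizes the
spectral measure of `T`). -/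
structure IsSpectralMeasure {H : Type*} [NormedAddCommGroup H] [InnerProductSpace ℂ H]
    [CompleteSpace H] (T : H →L[ℂ] H) (E : Set ℝ → H →L[ℂ] H) : Prop where
  isSelfAdjoint : ∀ Δ : Set ℝ, MeasurableSet Δ → IsSelfAdjoint (E Δ)
  map_inter : ∀ Δ₁ Δ₂ : Set ℝ, MeasurableSet Δ₁ → MeasurableSet Δ₂ →
    E Δ₁ * E Δ₂ = E (Δ₁ ∩ Δ₂)
  map_univ : E Set.univ = 1
  countably_additive : ∀ Δ : ℕ → Set ℝ, (∀ n, MeasurableSet (Δ n)) →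
    Pairwise (Function.onFun Disjoint Δ) →
    ∀ x : H, HasSum (fun n => E (Δ n) x) (E (⋃ n, Δ n) x)
  commutes : ∀ Δ : Set ℝ, MeasurableSet Δ → Commute T (E Δ)
  spectrum_loc : ∀ Δ : Set ℝ, MeasurableSet Δ → ∀ x : H, E Δ x = x →
    ∀ μ : ℝ, Metric.infDist μ Δ * ‖x‖ ≤ ‖T x - (μ : ℂ) • x‖

open scoped Real

open MeasureTheory Set Filter Topology

/-!
For `|s| ≥ π`, the function `1 / s` is a superposition of the sines `sin (s x)`, `x > 0`, whose
weight has `L¹` norm `1 / 2`. After rescaling, this is the Bohr–Favard inequality: if the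
frequencies `s i` have modulus at least `d`, then `‖∑ (s i)⁻¹ y i‖` is at most `π / (2 d)` times the
supremum over `x` of `‖∑ exp (i s i x) y i‖`. The weight comes from expanding `tanh (u / 2)` in
partial fractions and integrating over the Laplace parameter `u`.

Let `A = ∑ a i • P i` and `B = ∑ b j • Q j` be step operators on the ranges of two projections `E`
and `F`. The blocks `P i X Q j` of `E X F` are those of `A X - X B` divided by `a i - b j`, and the
exponential sum attached to the latter is `exp (i x A) (A X - X B) exp (-i x B)`, whose norm does
not exceed that of `A X - X B`. General self-adjoint operators are uniformly approximated by step
operators whose values are chosen in the given Borel sets, so that the gap survives. The order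
bounds this needs, `a • E Δ ≤ T E Δ ≤ b • E Δ` for `Δ ⊆ [a, b]`, follow from `spectrum_loc` by
letting `μ → ±∞`.
-/

section FavardMultiplier

lemma hasSum_coth {u : ℝ} (hu : u ≠ 0) :
    HasSum (fun n : ℕ => 2 * u / (u ^ 2 + ((n + 1) * π) ^ 2))
      (Real.cosh u / Real.sinh u - 1 / u) := by
  have hz : (u / π : ℂ) * Complex.I ∈ Complex.integerComplement := by
    rintro ⟨n, hn⟩
    exact div_ne_zero hu Real.pi_ne_zero (by simpa using (congrArg Complex.im hn).symm)
  have hcot : Complex.cot (π * (u / π * Complex.I)) =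
      Complex.cosh u / (Complex.sinh u * Complex.I) := by
    rw [← mul_assoc, mul_div_cancel₀ _ (by exact_mod_cast Real.pi_ne_zero),
      Complex.cot_eq_cos_div_sin, Complex.cos_mul_I, Complex.sin_mul_I]
  have hfactor (n : ℕ) : ((u / π : ℂ) * Complex.I + (n + 1)) * (u / π * Complex.I - (n + 1)) =
      -(u ^ 2 + ((n + 1) * π) ^ 2) / π ^ 2 := by
    field_simp
    ring_nf
    simp
  have hterm (n : ℕ) : ((2 * u / (u ^ 2 + ((n + 1) * π) ^ 2) : ℝ) : ℂ) =
      Complex.I / π * cotTerm (u / π * Complex.I) n := by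
    rw [cotTerm_identity hz, hfactor]
    push_cast
    field_simp
    simp [neg_div]
  have hvalue : ((Real.cosh u / Real.sinh u - 1 / u : ℝ) : ℂ) =
      Complex.I / π * ∑' n, cotTerm (u / π * Complex.I) n := by
    rw [← cot_series_rep' hz, hcot]
    push_cast
    field_simp
  rw [← Complex.hasSum_ofReal]
  simpa only [hterm, hvalue] using (summable_cotTerm hz).hasSum.mul_left (Complex.I / π)

lemma two_mul_coth_sub_coth_half (u : ℝ) :
    2 * (Real.cosh u / Real.sinh u) - Real.cosh (u / 2) / Real.sinh (u / 2) =
      Real.tanh (u / 2) := by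
  obtain ⟨v, rfl⟩ : ∃ v, u = 2 * v := ⟨u / 2, by ring⟩
  rw [mul_div_cancel_left₀ _ two_ne_zero, Real.tanh_eq_sinh_div_cosh, Real.cosh_two_mul,
    Real.sinh_two_mul]
  rcases eq_or_ne (Real.sinh v) 0 with hs | hs
  · simp [hs]
  · have hc := (Real.cosh_pos v).ne'
    field_simp
    ring

lemma hasSum_tanh_half {u : ℝ} (hu : u ≠ 0) :
    HasSum (fun k : ℕ => 4 * u / (u ^ 2 + ((2 * k + 1) * π) ^ 2)) (Real.tanh (u / 2)) := by
  set f : ℕ → ℝ := fun n => 2 * (2 * u / (u ^ 2 + ((n + 1) * π) ^ 2)) with hf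
  have hall : HasSum f _ := (hasSum_coth hu).mul_left 2
  have heven : Summable fun k => f (2 * k) :=
    hall.summable.comp_injective (mul_right_injective₀ two_ne_zero)
  have heven_term (k : ℕ) : f (2 * k) = 4 * u / (u ^ 2 + ((2 * k + 1) * π) ^ 2) := by
    simp only [hf]
    push_cast
    ring
  have hodd_term (k : ℕ) :
      f (2 * k + 1) = 2 * (u / 2) / ((u / 2) ^ 2 + ((k + 1) * π) ^ 2) := by
    simp only [hf]
    push_cast
    field_simp
    ring
  have hodd := hasSum_coth (div_ne_zero hu two_ne_zero)
  simp only [← hodd_term] at hodd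
  have hvalue : ∑' k, f (2 * k) = Real.tanh (u / 2) := by
    rw [eq_sub_of_add_eq ((heven.hasSum.even_add_odd hodd).unique hall),
      ← two_mul_coth_sub_coth_half]
    ring
  simpa only [heven_term, ← hvalue] using heven.hasSum

lemma integral_Ioi_div_sq_add_sq {a : ℝ} (ha : 0 < a) :
    ∫ u in Ioi (0 : ℝ), a / (u ^ 2 + a ^ 2) = π / 2 := by
  have hscale (u : ℝ) : a / (u ^ 2 + a ^ 2) = a⁻¹ * (1 + (a⁻¹ * u) ^ 2)⁻¹ := by
    field_simp
    ring
  simp only [hscale, integral_const_mul]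
  rw [integral_comp_mul_left_Ioi (fun u => (1 + u ^ 2)⁻¹) 0 (inv_pos.2 ha), mul_zero,
    integral_Ioi_inv_one_add_sq, Real.arctan_zero, sub_zero, inv_inv, smul_eq_mul,
    inv_mul_cancel_left₀ ha.ne']

lemma integrableOn_Ioi_div_sq_add_sq {a : ℝ} (ha : 0 < a) :
    IntegrableOn (fun u => a / (u ^ 2 + a ^ 2)) (Ioi 0) :=
  Integrable.of_integral_ne_zero (by rw [integral_Ioi_div_sq_add_sq ha]; positivity)

lemma tendsto_div_sq_add_sq_atTop (a : ℝ) :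
    Tendsto (fun u => u / (u ^ 2 + a ^ 2)) atTop (𝓝 0) := by
  refine squeeze_zero' (g := fun u => u⁻¹) ?_ ?_ tendsto_inv_atTop_zero
  all_goals filter_upwards [eventually_gt_atTop 0] with u hu
  · positivity
  · rw [div_le_iff₀ (by positivity), mul_add, pow_two, inv_mul_cancel_left₀ hu.ne']
    exact le_add_of_nonneg_right (by positivity)

lemma integral_Ioi_sq_div_sq_add_sq_sq {a : ℝ} (ha : 0 < a) :
    ∫ u in Ioi (0 : ℝ), (u / (u ^ 2 + a ^ 2)) ^ 2 = π / (4 * a) := by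
  have hderiv (u : ℝ) : HasDerivAt
      (fun u => (Real.arctan (u / a) / a - u / (u ^ 2 + a ^ 2)) / 2)
      ((u / (u ^ 2 + a ^ 2)) ^ 2) u := by
    have hquot := (hasDerivAt_id u).fun_div ((hasDerivAt_pow 2 u).add_const (a ^ 2))
      (by positivity)
    refine (((((hasDerivAt_id u).div_const a).arctan.div_const a).sub hquot).div_const
      2).congr_deriv ?_
    simp only [id]
    field_simp
    ring
  have hlim : Tendsto (fun u => (Real.arctan (u / a) / a - u / (u ^ 2 + a ^ 2)) / 2) atTop
      (𝓝 ((π / 2 / a - 0) / 2)) :=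
    ((((Real.tendsto_arctan_atTop.mono_right nhdsWithin_le_nhds).comp
      (tendsto_id.atTop_div_const ha)).div_const a).sub
        (tendsto_div_sq_add_sq_atTop a)).div_const 2
  rw [integral_Ioi_of_hasDerivAt_of_nonneg' (fun u _ => hderiv u) (fun u _ => sq_nonneg _) hlim]
  simp only [zero_div, Real.arctan_zero, sub_zero]
  field_simp
  norm_num

lemma integral_Ioi_sq_div_mul_of_ne {a b : ℝ} (ha : 0 ≤ a) (hb : 0 < b) (hab : a ≠ b) :
    ∫ u in Ioi (0 : ℝ), u / (u ^ 2 + a ^ 2) * (u / (u ^ 2 + b ^ 2)) = π / (2 * (a + b)) := by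
  have hsub : b - a ≠ 0 := sub_ne_zero.2 hab.symm
  have hadd : a + b ≠ 0 := by positivity
  have hpartial : ∀ u ∈ Ioi (0 : ℝ), u / (u ^ 2 + a ^ 2) * (u / (u ^ 2 + b ^ 2)) =
      (b * (b / (u ^ 2 + b ^ 2)) - a * (a / (u ^ 2 + a ^ 2))) / ((b - a) * (a + b)) := by
    intro u hu
    have hu : 0 < u := hu
    field_simp
    ring
  have hint {c : ℝ} (hc : 0 ≤ c) : IntegrableOn (fun u => c * (c / (u ^ 2 + c ^ 2))) (Ioi 0) := by
    rcases hc.eq_or_lt with rfl | hc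
    · simp
    · exact (integrableOn_Ioi_div_sq_add_sq hc).const_mul c
  have hval {c : ℝ} (hc : 0 ≤ c) :
      ∫ u in Ioi (0 : ℝ), c * (c / (u ^ 2 + c ^ 2)) = c * (π / 2) := by
    rcases hc.eq_or_lt with rfl | hc
    · simp
    · rw [integral_const_mul, integral_Ioi_div_sq_add_sq hc]
  rw [setIntegral_congr_fun measurableSet_Ioi hpartial, integral_div,
    integral_sub (hint hb.le) (hint ha), hval hb.le, hval ha]
  field_simp

lemma integral_Ioi_sq_div_mul {a b : ℝ} (ha : 0 ≤ a) (hb : 0 < b) :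
    ∫ u in Ioi (0 : ℝ), u / (u ^ 2 + a ^ 2) * (u / (u ^ 2 + b ^ 2)) = π / (2 * (a + b)) := by
  rcases eq_or_ne a b with rfl | hab
  · simp only [← sq]
    rw [integral_Ioi_sq_div_sq_add_sq_sq hb]
    ring
  · exact integral_Ioi_sq_div_mul_of_ne ha hb hab

lemma integrableOn_Ioi_sq_div_mul {a b : ℝ} (ha : 0 ≤ a) (hb : 0 < b) :
    IntegrableOn (fun u => u / (u ^ 2 + a ^ 2) * (u / (u ^ 2 + b ^ 2))) (Ioi 0) :=
  Integrable.of_integral_ne_zero (by rw [integral_Ioi_sq_div_mul ha hb]; positivity)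

/-- The weight `m(s, u) = 2 tanh (u / 2) ∫_{x > 0} sin (π x) exp (-u x) sin (s x) dx`, in closed
form. It satisfies `∫_{u > 0} m(s, u) du = 2 π / s` for `|s| ≥ π`, which is how the multiplier
`1 / s` in the Bohr–Favard inequality is reached. -/
noncomputable def favardMultiplier (s u : ℝ) : ℝ :=
  Real.tanh (u / 2) * (u / (u ^ 2 + (s - π) ^ 2) - u / (u ^ 2 + (s + π) ^ 2))

lemma favardMultiplier_neg (s u : ℝ) : favardMultiplier (-s) u = -favardMultiplier s u := by
  unfold favardMultiplier
  ring_nf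

lemma hasSum_favardMultiplier (s : ℝ) {u : ℝ} (hu : u ≠ 0) :
    HasSum (fun k : ℕ =>
      4 * (u / (u ^ 2 + (s - π) ^ 2) * (u / (u ^ 2 + ((2 * k + 1) * π) ^ 2))) -
      4 * (u / (u ^ 2 + (s + π) ^ 2) * (u / (u ^ 2 + ((2 * k + 1) * π) ^ 2))))
      (favardMultiplier s u) :=
  ((hasSum_tanh_half hu).mul_right _).congr_fun fun k => by ring

lemma hasSum_telescope_inv {s : ℝ} (hs : 0 < s) :
    HasSum (fun k : ℕ => 2 * π / (s + k * (2 * π)) - 2 * π / (s + (k + 1 : ℕ) * (2 * π)))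
      (2 * π / s) := by
  set g : ℕ → ℝ := fun k => 2 * π / (s + k * (2 * π))
  have hanti (k : ℕ) : g (k + 1) ≤ g k := by
    simp only [g]
    gcongr
    exact k.le_succ
  have hlim : Tendsto g atTop (𝓝 0) :=
    tendsto_const_nhds.div_atTop (tendsto_atTop_add_const_left _ _
      (tendsto_natCast_atTop_atTop.atTop_mul_const Real.two_pi_pos))
  change HasSum (fun k => g k - g (k + 1)) _
  rw [hasSum_iff_tendsto_nat_of_nonneg (fun k => sub_nonneg.2 (hanti k))]
  simp only [Finset.sum_range_sub']
  simpa [g] using hlim.const_sub (g 0)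

lemma integral_favardMultiplier_of_pi_le {s : ℝ} (hs : π ≤ s) :
    ∫ u in Ioi (0 : ℝ), favardMultiplier s u = 2 * π / s := by
  have hπ := Real.pi_pos
  have hsub : 0 ≤ s - π := sub_nonneg.2 hs
  have hadd : 0 ≤ s + π := by linarith
  have hodd (k : ℕ) : 0 < (2 * k + 1) * π := by positivity
  have hquadruple (c : ℝ) : 4 * (π / (2 * c)) = 2 * π / c := by ring
  set F : ℕ → ℝ → ℝ := fun k u =>
    4 * (u / (u ^ 2 + (s - π) ^ 2) * (u / (u ^ 2 + ((2 * k + 1) * π) ^ 2))) -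
    4 * (u / (u ^ 2 + (s + π) ^ 2) * (u / (u ^ 2 + ((2 * k + 1) * π) ^ 2))) with hF
  have hint (k : ℕ) : IntegrableOn (F k) (Ioi 0) :=
    ((integrableOn_Ioi_sq_div_mul hsub (hodd k)).const_mul 4).sub
      ((integrableOn_Ioi_sq_div_mul hadd (hodd k)).const_mul 4)
  have hval (k : ℕ) : ∫ u in Ioi (0 : ℝ), F k u =
      2 * π / (s + k * (2 * π)) - 2 * π / (s + (k + 1 : ℕ) * (2 * π)) := by
    rw [integral_sub ((integrableOn_Ioi_sq_div_mul hsub (hodd k)).const_mul 4)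
      ((integrableOn_Ioi_sq_div_mul hadd (hodd k)).const_mul 4), integral_const_mul,
      integral_const_mul, integral_Ioi_sq_div_mul hsub (hodd k),
      integral_Ioi_sq_div_mul hadd (hodd k), hquadruple, hquadruple]
    push_cast
    ring_nf
  have hnonneg (k : ℕ) : ∀ u ∈ Ioi (0 : ℝ), 0 ≤ F k u := by
    intro u hu
    have hu : 0 < u := hu
    simp only [hF, sub_nonneg]
    gcongr
    linarith
  have hnorm (k : ℕ) : ∫ u in Ioi (0 : ℝ), ‖F k u‖ = ∫ u in Ioi (0 : ℝ), F k u :=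
    setIntegral_congr_fun measurableSet_Ioi fun u hu => Real.norm_of_nonneg (hnonneg k u hu)
  have htelescope := hasSum_telescope_inv (hπ.trans_le hs)
  have hswap := hasSum_integral_of_summable_integral_norm hint
    (by simpa only [hnorm, hval] using htelescope.summable)
  simp only [hval] at hswap
  rw [htelescope.unique hswap]
  exact setIntegral_congr_fun measurableSet_Ioi fun u hu =>
    (hasSum_favardMultiplier s (ne_of_gt hu)).tsum_eq.symm

lemma integral_favardMultiplier {s : ℝ} (hs : π ≤ |s|) :
    ∫ u in Ioi (0 : ℝ), favardMultiplier s u = 2 * π / s := by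
  rcases le_abs.1 hs with h | h
  · exact integral_favardMultiplier_of_pi_le h
  · simpa [favardMultiplier_neg, integral_neg, div_neg] using integral_favardMultiplier_of_pi_le h

lemma integrableOn_favardMultiplier {s : ℝ} (hs : π ≤ |s|) :
    IntegrableOn (favardMultiplier s) (Ioi 0) := by
  have hs₀ : s ≠ 0 := abs_pos.1 (Real.pi_pos.trans_le hs)
  exact Integrable.of_integral_ne_zero (by rw [integral_favardMultiplier hs]; positivity)

end FavardMultiplier

section LaplaceTransform

lemma integrableOn_mul_exp_neg_of_abs_le_one {f : ℝ → ℝ} (hf : Continuous f)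
    (hf_le : ∀ x, |f x| ≤ 1) {u : ℝ} (hu : 0 < u) :
    IntegrableOn (fun x => f x * Real.exp (-u * x)) (Ioi 0) :=
  (exp_neg_integrableOn_Ioi 0 hu).bdd_mul hf.aestronglyMeasurable (ae_of_all _ hf_le)

lemma integral_cos_mul_exp_neg {u : ℝ} (hu : 0 < u) (c : ℝ) :
    ∫ x in Ioi (0 : ℝ), Real.cos (c * x) * Real.exp (-u * x) = u / (u ^ 2 + c ^ 2) := by
  have hre : (-u + c * Complex.I : ℂ).re < 0 := by simpa using hu
  have hexp := congrArg Complex.re (integral_exp_mul_complex_Ioi hre 0)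
  rw [← RCLike.re_to_complex, ← integral_re (integrableOn_exp_mul_complex_Ioi hre 0)] at hexp
  calc ∫ x in Ioi (0 : ℝ), Real.cos (c * x) * Real.exp (-u * x)
    _ = ∫ x in Ioi (0 : ℝ), RCLike.re (Complex.exp ((-u + c * Complex.I) * x)) := by
      congr with x
      simp [Complex.exp_re, mul_comm]
    _ = u / (u ^ 2 + c ^ 2) := by
      rw [hexp]
      simp [Complex.div_re, Complex.normSq_apply]
      ring

lemma integral_sin_mul_exp_neg_mul_sin {u : ℝ} (hu : 0 < u) (r s : ℝ) :
    ∫ x in Ioi (0 : ℝ), Real.sin (r * x) * Real.exp (-u * x) * Real.sin (s * x) =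
      (u / (u ^ 2 + (s - r) ^ 2) - u / (u ^ 2 + (s + r) ^ 2)) / 2 := by
  have hint (c : ℝ) : IntegrableOn (fun x => Real.cos (c * x) * Real.exp (-u * x)) (Ioi 0) :=
    integrableOn_mul_exp_neg_of_abs_le_one (by fun_prop) (fun _ => Real.abs_cos_le_one _) hu
  rw [← integral_cos_mul_exp_neg hu, ← integral_cos_mul_exp_neg hu,
    ← integral_sub (hint _) (hint _), ← integral_div]
  congr with x
  rw [sub_mul, add_mul, Real.cos_sub, Real.cos_add]
  ring

lemma integral_sin_pi_mul_exp_neg_zero_one (u : ℝ) :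
    ∫ x in (0 : ℝ)..1, Real.sin (π * x) * Real.exp (-u * x) =
      π * (1 + Real.exp (-u)) / (u ^ 2 + π ^ 2) := by
  have hderiv : ∀ x ∈ uIcc (0 : ℝ) 1, HasDerivAt
      (fun x => -(π * Real.cos (π * x) + u * Real.sin (π * x)) * Real.exp (-u * x) /
        (u ^ 2 + π ^ 2)) (Real.sin (π * x) * Real.exp (-u * x)) x := by
    intro x _
    have hmul (c : ℝ) : HasDerivAt (fun x : ℝ => c * x) c x := by
      simpa using (hasDerivAt_id x).const_mul c
    refine (((((hmul π).cos.const_mul π).fun_add ((hmul π).sin.const_mul u)).fun_neg.fun_mul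
      (hmul (-u)).exp).div_const (u ^ 2 + π ^ 2)).congr_deriv ?_
    field_simp
    ring
  rw [intervalIntegral.integral_eq_sub_of_hasDerivAt hderiv
    (Continuous.intervalIntegrable (by fun_prop) _ _)]
  simp only [mul_one, Real.cos_pi, Real.sin_pi, mul_zero, Real.cos_zero, Real.sin_zero,
    Real.exp_zero]
  field_simp
  ring

lemma one_sub_exp_neg_mul_integral_of_periodic {f : ℝ → ℝ} (hf : Function.Periodic f 1) {u : ℝ}
    (hint : IntegrableOn (fun x => f x * Real.exp (-u * x)) (Ioi 0)) :
    (1 - Real.exp (-u)) * ∫ x in Ioi (0 : ℝ), f x * Real.exp (-u * x) =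
      ∫ x in (0 : ℝ)..1, f x * Real.exp (-u * x) := by
  have hshift : ∫ x in Ioi (1 : ℝ), f x * Real.exp (-u * x) =
      Real.exp (-u) * ∫ x in Ioi (0 : ℝ), f x * Real.exp (-u * x) := by
    rw [← (measurePreserving_add_right volume (1 : ℝ)).setIntegral_preimage_emb
      (measurableEmbedding_addRight 1), preimage_add_const_Ioi, sub_self, ← integral_const_mul]
    congr with x
    rw [hf, mul_add, mul_one, Real.exp_add]
    ring
  rw [← intervalIntegral.integral_Ioi_sub_Ioi hint zero_le_one, hshift]
  ring

lemma tanh_half_eq (u : ℝ) :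
    Real.tanh (u / 2) = (1 - Real.exp (-u)) / (1 + Real.exp (-u)) := by
  have hexp : Real.exp (-u) = Real.exp (-(u / 2)) / Real.exp (u / 2) := by
    rw [← Real.exp_sub]
    ring_nf
  rw [Real.tanh_eq, hexp]
  field_simp

lemma integrableOn_abs_sin_mul_exp_neg {u : ℝ} (hu : 0 < u) (r : ℝ) :
    IntegrableOn (fun x => |Real.sin (r * x)| * Real.exp (-u * x)) (Ioi 0) :=
  integrableOn_mul_exp_neg_of_abs_le_one (by fun_prop)
    (fun x => by rw [abs_abs]; exact Real.abs_sin_le_one _) hu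

lemma tanh_half_mul_integral_abs_sin_pi_mul_exp_neg {u : ℝ} (hu : 0 < u) :
    Real.tanh (u / 2) * ∫ x in Ioi (0 : ℝ), |Real.sin (π * x)| * Real.exp (-u * x) =
      π / (u ^ 2 + π ^ 2) := by
  have hperiodic : Function.Periodic (fun x => |Real.sin (π * x)|) 1 := fun x => by
    simp only [mul_add, mul_one, Real.sin_add_pi, abs_neg]
  have habs : ∫ x in (0 : ℝ)..1, |Real.sin (π * x)| * Real.exp (-u * x) =
      ∫ x in (0 : ℝ)..1, Real.sin (π * x) * Real.exp (-u * x) := by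
    refine intervalIntegral.integral_congr fun x hx => ?_
    rw [uIcc_of_le zero_le_one] at hx
    simp only [abs_of_nonneg (Real.sin_nonneg_of_nonneg_of_le_pi
      (mul_nonneg Real.pi_pos.le hx.1) (mul_le_of_le_one_right Real.pi_pos.le hx.2))]
  rw [tanh_half_eq, div_mul_eq_mul_div, one_sub_exp_neg_mul_integral_of_periodic hperiodic
    (integrableOn_abs_sin_mul_exp_neg hu π), habs, integral_sin_pi_mul_exp_neg_zero_one]
  field_simp

end LaplaceTransform

section BohrFavard

variable {ι V : Type*} [NormedAddCommGroup V] [NormedSpace ℂ V]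

lemma norm_sum_sin_smul_le {t : Finset ι} {s : ι → ℝ} {y : ι → V} {C : ℝ}
    (hC : ∀ x : ℝ, ‖∑ i ∈ t, Complex.exp (s i * x * Complex.I) • y i‖ ≤ C) (x : ℝ) :
    ‖∑ i ∈ t, Real.sin (s i * x) • y i‖ ≤ C := by
  have heuler : ∑ i ∈ t, Real.sin (s i * x) • y i = (Complex.I / 2) •
      (∑ i ∈ t, Complex.exp (s i * (-x : ℝ) * Complex.I) • y i -
        ∑ i ∈ t, Complex.exp (s i * x * Complex.I) • y i) := by
    rw [← Finset.sum_sub_distrib, Finset.smul_sum]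
    refine Finset.sum_congr rfl fun i _ => ?_
    rw [← sub_smul, smul_smul, ← Complex.coe_smul, Complex.ofReal_sin, Complex.sin]
    push_cast
    ring_nf
  calc ‖∑ i ∈ t, Real.sin (s i * x) • y i‖ ≤ 1 / 2 * (C + C) := by
        rw [heuler, norm_smul, norm_div, Complex.norm_I, RCLike.norm_ofNat]
        gcongr
        exact norm_sub_le_of_le (hC (-x)) (hC x)
    _ = C := by ring

variable [CompleteSpace V]

lemma sum_favardMultiplier_smul (t : Finset ι) (s : ι → ℝ) (y : ι → V) {u : ℝ} (hu : 0 < u) :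
    ∑ i ∈ t, favardMultiplier (s i) u • y i = (2 * Real.tanh (u / 2)) •
      ∫ x in Ioi (0 : ℝ), (Real.sin (π * x) * Real.exp (-u * x)) •
        ∑ i ∈ t, Real.sin (s i * x) • y i := by
  have hint (i : ι) : Integrable (fun x =>
      (Real.sin (π * x) * Real.exp (-u * x) * Real.sin (s i * x)) • y i)
      (volume.restrict (Ioi 0)) := by
    have hsin (x : ℝ) : |Real.sin (π * x) * Real.sin (s i * x)| ≤ 1 := by
      rw [abs_mul]
      exact mul_le_one₀ (Real.abs_sin_le_one _) (abs_nonneg _) (Real.abs_sin_le_one _)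
    simpa only [mul_right_comm] using
      (integrableOn_mul_exp_neg_of_abs_le_one (by fun_prop) hsin hu).smul_const (y i)
  simp only [Finset.smul_sum, smul_smul]
  rw [integral_finsetSum _ fun i _ => hint i, Finset.smul_sum]
  refine Finset.sum_congr rfl fun i _ => ?_
  rw [integral_smul_const, integral_sin_mul_exp_neg_mul_sin hu, smul_smul, favardMultiplier]
  ring_nf

lemma norm_sum_favardMultiplier_smul_le {t : Finset ι} {s : ι → ℝ} {y : ι → V} {C : ℝ}
    (hC : ∀ x : ℝ, ‖∑ i ∈ t, Complex.exp (s i * x * Complex.I) • y i‖ ≤ C) {u : ℝ} (hu : 0 < u) :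
    ‖∑ i ∈ t, favardMultiplier (s i) u • y i‖ ≤ 2 * C * (π / (u ^ 2 + π ^ 2)) := by
  have htanh : 0 ≤ Real.tanh (u / 2) := by
    rw [Real.tanh_eq_sinh_div_cosh]
    exact div_nonneg (Real.sinh_nonneg_iff.2 (half_pos hu).le) (Real.cosh_pos _).le
  have hbound (x : ℝ) : ‖(Real.sin (π * x) * Real.exp (-u * x)) •
      ∑ i ∈ t, Real.sin (s i * x) • y i‖ ≤ |Real.sin (π * x)| * Real.exp (-u * x) * C := by
    rw [norm_smul, norm_mul, Real.norm_eq_abs, Real.norm_of_nonneg (Real.exp_pos _).le]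
    gcongr
    exact norm_sum_sin_smul_le hC x
  calc ‖∑ i ∈ t, favardMultiplier (s i) u • y i‖
    _ ≤ 2 * Real.tanh (u / 2) *
        ∫ x in Ioi (0 : ℝ), |Real.sin (π * x)| * Real.exp (-u * x) * C := by
      rw [sum_favardMultiplier_smul t s y hu, norm_smul, Real.norm_of_nonneg (by positivity)]
      gcongr
      exact norm_integral_le_of_norm_le ((integrableOn_abs_sin_mul_exp_neg hu π).mul_const C)
        (ae_of_all _ hbound)
    _ = 2 * C * (π / (u ^ 2 + π ^ 2)) := by
      rw [← tanh_half_mul_integral_abs_sin_pi_mul_exp_neg hu, integral_mul_const]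
      ring

lemma norm_sum_inv_smul_le_of_pi_le_abs {t : Finset ι} {s : ι → ℝ} {y : ι → V} {C : ℝ}
    (hs : ∀ i ∈ t, π ≤ |s i|)
    (hC : ∀ x : ℝ, ‖∑ i ∈ t, Complex.exp (s i * x * Complex.I) • y i‖ ≤ C) :
    ‖∑ i ∈ t, (s i)⁻¹ • y i‖ ≤ C / 2 := by
  have hrep : (2 * π) • ∑ i ∈ t, (s i)⁻¹ • y i =
      ∫ u in Ioi (0 : ℝ), ∑ i ∈ t, favardMultiplier (s i) u • y i := by
    rw [integral_finsetSum _ fun i hi => (integrableOn_favardMultiplier (hs i hi)).smul_const _,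
      Finset.smul_sum]
    refine Finset.sum_congr rfl fun i hi => ?_
    rw [integral_smul_const, integral_favardMultiplier (hs i hi), smul_smul, div_eq_mul_inv]
  have hbound : 2 * π * ‖∑ i ∈ t, (s i)⁻¹ • y i‖ ≤ 2 * C * (π / 2) := by
    rw [← Real.norm_of_nonneg Real.two_pi_pos.le, ← norm_smul, hrep,
      ← integral_Ioi_div_sq_add_sq Real.pi_pos, ← integral_const_mul]
    refine norm_integral_le_of_norm_le
      ((integrableOn_Ioi_div_sq_add_sq Real.pi_pos).const_mul (2 * C)) ?_
    filter_upwards [ae_restrict_mem measurableSet_Ioi] with u hu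
    exact norm_sum_favardMultiplier_smul_le hC hu
  exact le_of_mul_le_mul_left (hbound.trans_eq (by ring)) Real.two_pi_pos

theorem norm_sum_inv_smul_le {t : Finset ι} {s : ι → ℝ} {y : ι → V} {C d : ℝ} (hd : 0 < d)
    (hs : ∀ i ∈ t, d ≤ |s i|)
    (hC : ∀ x : ℝ, ‖∑ i ∈ t, Complex.exp (s i * x * Complex.I) • y i‖ ≤ C) :
    d * ‖∑ i ∈ t, (s i)⁻¹ • y i‖ ≤ π / 2 * C := by
  have hπ := Real.pi_pos
  have hscaled := norm_sum_inv_smul_le_of_pi_le_abs (t := t) (s := fun i => π / d * s i) (y := y)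
    (C := C) (fun i hi => ?_) (fun x => ?_)
  · simp only [mul_inv, inv_div, mul_smul, ← Finset.smul_sum] at hscaled
    rw [norm_smul, Real.norm_of_nonneg (by positivity), div_mul_eq_mul_div,
      div_le_iff₀ hπ] at hscaled
    linarith
  · rw [abs_mul, abs_of_pos (by positivity), div_mul_eq_mul_div, le_div_iff₀ hd]
    exact mul_le_mul_of_nonneg_left (hs i hi) hπ.le
  · convert hC (π / d * x) using 6
    push_cast
    ring

end BohrFavard

section OrthogonalProjections

variable {ι κ : Type*}

lemma sum_smul_mul_sum_smul_of_orthogonalIdempotents {S R : Type*} [CommSemiring S] [Semiring R]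
    [Algebra S R] {P : ι → R} (hP : OrthogonalIdempotents P) (t : Finset ι) (c d : ι → S) :
    (∑ i ∈ t, c i • P i) * ∑ i ∈ t, d i • P i = ∑ i ∈ t, (c i * d i) • P i := by
  classical
  simp only [Finset.sum_mul_sum, smul_mul_smul_comm, hP.mul_eq, smul_ite, smul_zero]
  refine Finset.sum_congr rfl fun i hi => ?_
  rw [Finset.sum_ite_eq, if_pos hi]

lemma norm_sum_smul_le_one_of_orthogonalIdempotents {R : Type*} [CStarAlgebra R] {P : ι → R}
    (hP : OrthogonalIdempotents P) (hP_sa : ∀ i, IsSelfAdjoint (P i)) (t : Finset ι) {c : ι → ℂ}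
    (hc : ∀ i, ‖c i‖ = 1) : ‖∑ i ∈ t, c i • P i‖ ≤ 1 := by
  have hproj : IsStarProjection (∑ i ∈ t, P i) :=
    ⟨hP.isIdempotentElem_sum, isSelfAdjoint_sum t fun i _ => hP_sa i⟩
  have hconj (i : ι) : star (c i) * c i = 1 := by
    simpa [hc i] using Complex.conj_mul' (c i)
  have hstar : star (∑ i ∈ t, c i • P i) * ∑ i ∈ t, c i • P i = ∑ i ∈ t, P i := by
    simp only [star_sum, star_smul, (hP_sa _).star_eq,
      sum_smul_mul_sum_smul_of_orthogonalIdempotents hP, hconj, one_smul]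
  rw [← sq_le_one_iff₀ (norm_nonneg _), sq, ← CStarRing.norm_star_mul_self, hstar]
  exact hproj.norm_le

variable {H K : Type*} [NormedAddCommGroup H] [InnerProductSpace ℂ H]
  [NormedAddCommGroup K] [InnerProductSpace ℂ K]

lemma norm_comp_comp_le_of_norm_le_one {U : H →L[ℂ] H} {V : K →L[ℂ] K} (hU : ‖U‖ ≤ 1)
    (hV : ‖V‖ ≤ 1) (X : K →L[ℂ] H) : ‖U ∘L X ∘L V‖ ≤ ‖X‖ :=
  calc ‖U ∘L X ∘L V‖ ≤ ‖U‖ * (‖X‖ * ‖V‖) :=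
        (U.opNorm_comp_le _).trans (by gcongr; exact X.opNorm_comp_le V)
    _ ≤ 1 * (‖X‖ * 1) := by gcongr
    _ = ‖X‖ := by ring

lemma sum_smul_comp_comp_sum_smul (t : Finset ι) (t' : Finset κ) (P : ι → H →L[ℂ] H)
    (Q : κ → K →L[ℂ] K) (X : K →L[ℂ] H) (c : ι → ℂ) (d : κ → ℂ) :
    (∑ i ∈ t, c i • P i) ∘L X ∘L (∑ j ∈ t', d j • Q j) =
      ∑ p ∈ t ×ˢ t', (c p.1 * d p.2) • (P p.1 ∘L X ∘L Q p.2) := by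
  simp only [ContinuousLinearMap.finsetSum_comp, ContinuousLinearMap.comp_finsetSum,
    Finset.sum_product_right, ContinuousLinearMap.smul_comp, ContinuousLinearMap.comp_smul,
    Finset.smul_sum, smul_smul, mul_comm (d _)]

lemma sum_smul_comp_sub_comp_sum_smul {P : ι → H →L[ℂ] H} {Q : κ → K →L[ℂ] K}
    (hP : OrthogonalIdempotents P) (hQ : OrthogonalIdempotents Q) (t : Finset ι) (t' : Finset κ)
    (X : K →L[ℂ] H) (a c : ι → ℂ) (b d : κ → ℂ) :
    (∑ i ∈ t, c i • P i) ∘L ((∑ i ∈ t, a i • P i) ∘L X ∘L (∑ j ∈ t', Q j) -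
      (∑ i ∈ t, P i) ∘L X ∘L (∑ j ∈ t', b j • Q j)) ∘L (∑ j ∈ t', d j • Q j) =
      ∑ p ∈ t ×ˢ t', (c p.1 * d p.2 * (a p.1 - b p.2)) • (P p.1 ∘L X ∘L Q p.2) := by
  have hP_mul (a : ι → ℂ) := sum_smul_mul_sum_smul_of_orthogonalIdempotents hP t c a
  have hQ_mul (b : κ → ℂ) := sum_smul_mul_sum_smul_of_orthogonalIdempotents hQ t' b d
  have hP_one : (∑ i ∈ t, c i • P i) * ∑ i ∈ t, P i = ∑ i ∈ t, c i • P i := by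
    simpa using hP_mul 1
  have hQ_one : (∑ j ∈ t', Q j) * ∑ j ∈ t', d j • Q j = ∑ j ∈ t', d j • Q j := by
    simpa using hQ_mul 1
  calc _ = ((∑ i ∈ t, c i • P i) * ∑ i ∈ t, a i • P i) ∘L X ∘L
          ((∑ j ∈ t', Q j) * ∑ j ∈ t', d j • Q j) -
        ((∑ i ∈ t, c i • P i) * ∑ i ∈ t, P i) ∘L X ∘L
          ((∑ j ∈ t', b j • Q j) * ∑ j ∈ t', d j • Q j) := by
        simp only [ContinuousLinearMap.mul_def, ContinuousLinearMap.comp_sub,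
          ContinuousLinearMap.sub_comp, ContinuousLinearMap.comp_assoc]
    _ = _ := by
        rw [hP_mul, hQ_mul, hP_one, hQ_one, sum_smul_comp_comp_sum_smul,
          sum_smul_comp_comp_sum_smul, ← Finset.sum_sub_distrib]
        refine Finset.sum_congr rfl fun p _ => ?_
        rw [← sub_smul]
        ring_nf

variable [CompleteSpace H] [CompleteSpace K]

theorem mul_norm_comp_comp_le_of_orthogonalIdempotents {P : ι → H →L[ℂ] H} {Q : κ → K →L[ℂ] K}
    (hP : OrthogonalIdempotents P) (hP_sa : ∀ i, IsSelfAdjoint (P i))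
    (hQ : OrthogonalIdempotents Q) (hQ_sa : ∀ j, IsSelfAdjoint (Q j))
    {t : Finset ι} {t' : Finset κ} {a : ι → ℝ} {b : κ → ℝ} {d : ℝ} (hd : 0 < d)
    (hab : ∀ i ∈ t, ∀ j ∈ t', d ≤ |a i - b j|) (X : K →L[ℂ] H) :
    d * ‖(∑ i ∈ t, P i) ∘L X ∘L (∑ j ∈ t', Q j)‖ ≤
      π / 2 * ‖(∑ i ∈ t, (a i : ℂ) • P i) ∘L X ∘L (∑ j ∈ t', Q j) -
        (∑ i ∈ t, P i) ∘L X ∘L (∑ j ∈ t', (b j : ℂ) • Q j)‖ := by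
  set W := (∑ i ∈ t, (a i : ℂ) • P i) ∘L X ∘L (∑ j ∈ t', Q j) -
    (∑ i ∈ t, P i) ∘L X ∘L (∑ j ∈ t', (b j : ℂ) • Q j) with hW
  let y (p : ι × κ) : K →L[ℂ] H := (a p.1 - b p.2) • (P p.1 ∘L X ∘L Q p.2)
  have hab' : ∀ p ∈ t ×ˢ t', d ≤ |a p.1 - b p.2| := fun p hp =>
    hab _ (Finset.mem_product.1 hp).1 _ (Finset.mem_product.1 hp).2
  have hsum : (∑ i ∈ t, P i) ∘L X ∘L (∑ j ∈ t', Q j) =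
      ∑ p ∈ t ×ˢ t', (a p.1 - b p.2)⁻¹ • y p := by
    have hexpand := sum_smul_comp_comp_sum_smul t t' P Q X 1 1
    simp only [Pi.one_apply, one_smul, mul_one] at hexpand
    rw [hexpand]
    exact Finset.sum_congr rfl fun p hp =>
      (inv_smul_smul₀ (abs_pos.1 (hd.trans_le (hab' p hp))) _).symm
  have hexp (x : ℝ) : ∑ p ∈ t ×ˢ t', Complex.exp ((a p.1 - b p.2 : ℝ) * x * Complex.I) • y p =
      (∑ i ∈ t, Complex.exp ((a i * x : ℝ) * Complex.I) • P i) ∘L W ∘L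
        ∑ j ∈ t', Complex.exp ((-b j * x : ℝ) * Complex.I) • Q j := by
    rw [hW, sum_smul_comp_sub_comp_sum_smul hP hQ]
    refine Finset.sum_congr rfl fun p _ => ?_
    simp only [y]
    rw [← Complex.coe_smul (_ - _), smul_smul, ← Complex.exp_add]
    push_cast
    ring_nf
  rw [hsum]
  refine norm_sum_inv_smul_le hd hab' fun x => ?_
  have hU := norm_sum_smul_le_one_of_orthogonalIdempotents hP hP_sa t
    fun i => Complex.norm_exp_ofReal_mul_I (a i * x)
  have hV := norm_sum_smul_le_one_of_orthogonalIdempotents hQ hQ_sa t'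
    fun j => Complex.norm_exp_ofReal_mul_I (-b j * x)
  rw [hexp]
  exact norm_comp_comp_le_of_norm_le_one hU hV W

end OrthogonalProjections

section LoewnerOrder

variable {R : Type*} [CStarAlgebra R] [PartialOrder R] [StarOrderedRing R]

lemma norm_le_of_neg_algebraMap_le_of_le_algebraMap {x : R} {r : ℝ} (hr : 0 ≤ r)
    (hx_neg : -algebraMap ℝ R r ≤ x) (hx : x ≤ algebraMap ℝ R r) : ‖x‖ ≤ r := by
  have hx_sa : IsSelfAdjoint x := by
    simpa using (IsSelfAdjoint.algebraMap R (.all r)).sub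
      (IsSelfAdjoint.of_nonneg (sub_nonneg.2 hx))
  cases subsingleton_or_nontrivial R
  · simpa [Subsingleton.elim x 0] using hr
  rcases CStarAlgebra.norm_or_neg_norm_mem_spectrum hx_sa with h | h
  · exact (le_algebraMap_iff_spectrum_le hx_sa).1 hx _ h
  · rw [← map_neg] at hx_neg
    exact neg_le_neg_iff.1 ((algebraMap_le_iff_le_spectrum hx_sa).1 hx_neg _ h)

lemma norm_sum_le_of_orthogonalIdempotents {ι : Type*} {P D : ι → R}
    (hP : OrthogonalIdempotents P) (hP_sa : ∀ i, IsSelfAdjoint (P i)) {t : Finset ι} {r : ℝ}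
    (hr : 0 ≤ r) (hD_neg : ∀ i ∈ t, -(r • P i) ≤ D i) (hD : ∀ i ∈ t, D i ≤ r • P i) :
    ‖∑ i ∈ t, D i‖ ≤ r := by
  have hproj : IsStarProjection (∑ i ∈ t, P i) :=
    ⟨hP.isIdempotentElem_sum, isSelfAdjoint_sum t fun i _ => hP_sa i⟩
  have hsum : r • ∑ i ∈ t, P i ≤ algebraMap ℝ R r := by
    rw [Algebra.algebraMap_eq_smul_one]
    exact smul_le_smul_of_nonneg_left hproj.le_one hr
  refine norm_le_of_neg_algebraMap_le_of_le_algebraMap hr ?_ ?_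
  · refine (neg_le_neg hsum).trans ?_
    rw [Finset.smul_sum, ← Finset.sum_neg_distrib]
    exact Finset.sum_le_sum hD_neg
  · refine le_trans ?_ hsum
    rw [Finset.smul_sum]
    exact Finset.sum_le_sum hD

end LoewnerOrder

section Accretive

variable {H : Type*} [NormedAddCommGroup H] [InnerProductSpace ℂ H]

lemma re_inner_nonneg_of_forall_mul_norm_le {x z : H}
    (h : ∀ r : ℝ, 0 ≤ r → r * ‖x‖ ≤ ‖z + (r : ℂ) • x‖) : 0 ≤ (inner ℂ z x).re := by
  have hlinear (r : ℝ) (hr : 0 ≤ r) : 0 ≤ ‖z‖ ^ 2 + 2 * r * (inner ℂ z x).re := by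
    have hsq := pow_le_pow_left₀ (by positivity) (h r hr) 2
    rw [@norm_add_sq ℂ, inner_smul_right, norm_smul, mul_pow, mul_pow, Complex.norm_real,
      Real.norm_eq_abs, sq_abs, RCLike.re_to_complex, Complex.re_ofReal_mul] at hsq
    linarith
  by_contra! hneg
  have hlarge := hlinear ((‖z‖ ^ 2 + 1) / -(inner ℂ z x).re)
    (div_nonneg (by positivity) (neg_pos.2 hneg).le)
  rw [div_neg, mul_neg, neg_mul, mul_assoc, div_mul_cancel₀ _ hneg.ne] at hlarge
  nlinarith [sq_nonneg ‖z‖]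

lemma mul_nonneg_of_forall_mul_norm_le [CompleteSpace H] {S P : H →L[ℂ] H} (hS : IsSelfAdjoint S)
    (hP : IsStarProjection P) (hSP : Commute S P)
    (h : ∀ (x : H) (r : ℝ), 0 ≤ r → r * ‖P x‖ ≤ ‖S (P x) + (r : ℂ) • P x‖) : 0 ≤ S * P := by
  rw [ContinuousLinearMap.nonneg_iff_isPositive, ContinuousLinearMap.isPositive_def']
  refine ⟨(hS.commute_iff hP.isSelfAdjoint).1 hSP, fun x => ?_⟩
  have hconj : S * P = P * S * P := by
    rw [← hSP.eq, mul_assoc, hP.isIdempotentElem.eq]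
  have hinner : inner ℂ ((S * P) x) x = inner ℂ (S (P x)) (P x) := by
    rw [hconj]
    exact hP.isSelfAdjoint.isSymmetric _ _
  rw [ContinuousLinearMap.reApplyInnerSelf_apply, hinner]
  exact re_inner_nonneg_of_forall_mul_norm_le (h x)

end Accretive

namespace IsSpectralMeasure

variable {H : Type*} [NormedAddCommGroup H] [InnerProductSpace ℂ H] [CompleteSpace H]
  {T : H →L[ℂ] H} {E : Set ℝ → H →L[ℂ] H} {Δ S : Set ℝ}

lemma map_empty (hE : IsSpectralMeasure T E) : E ∅ = 0 := by
  ext x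
  exact (summable_const_iff _).1 (hE.countably_additive (fun _ => ∅) (fun _ => .empty)
    (fun _ _ _ => disjoint_empty _) x).summable

lemma isStarProjection (hE : IsSpectralMeasure T E) (hΔ : MeasurableSet Δ) :
    IsStarProjection (E Δ) where
  isIdempotentElem := by rw [IsIdempotentElem, hE.map_inter Δ Δ hΔ hΔ, inter_self]
  isSelfAdjoint := hE.isSelfAdjoint Δ hΔ

lemma apply_apply (hE : IsSpectralMeasure T E) (hΔ : MeasurableSet Δ) (x : H) :
    E Δ (E Δ x) = E Δ x :=
  DFunLike.congr_fun (hE.isStarProjection hΔ).isIdempotentElem x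

lemma mul_norm_apply_le (hE : IsSpectralMeasure T E) (hΔ : MeasurableSet Δ) {μ r : ℝ}
    (hr : ∀ y ∈ Δ, r ≤ |μ - y|) (x : H) :
    r * ‖E Δ x‖ ≤ ‖T (E Δ x) - (μ : ℂ) • E Δ x‖ := by
  rcases Δ.eq_empty_or_nonempty with rfl | hne
  · simp [hE.map_empty]
  · exact (mul_le_mul_of_nonneg_right ((Metric.le_infDist hne).2 fun {y} hy => hr y hy)
      (norm_nonneg _)).trans (hE.spectrum_loc Δ hΔ _ (hE.apply_apply hΔ x) μ)

lemma exists_mem_abs_lt (hE : IsSpectralMeasure T E) (hΔ : MeasurableSet Δ) (hne : E Δ ≠ 0)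
    {r : ℝ} (hr : ‖T‖ < r) : ∃ y ∈ Δ, |y| < r := by
  contrapose! hne
  ext x
  have hle : r * ‖E Δ x‖ ≤ ‖T‖ * ‖E Δ x‖ := by
    simpa using (hE.mul_norm_apply_le hΔ (μ := 0) (by simpa using hne) x).trans
      (by simpa using T.le_opNorm (E Δ x))
  by_contra hx
  exact hr.not_ge (le_of_mul_le_mul_right hle (norm_pos_iff.2 hx))

lemma mul_le_smul (hE : IsSpectralMeasure T E) (hT : IsSelfAdjoint T) (hΔ : MeasurableSet Δ)
    {b : ℝ} (hb : Δ ⊆ Iic b) : T * E Δ ≤ b • E Δ := by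
  rw [← sub_nonneg, ← smul_one_mul b, ← sub_mul]
  refine mul_nonneg_of_forall_mul_norm_le ((IsSelfAdjoint.smul (.all b) (.one _)).sub hT)
    (hE.isStarProjection hΔ)
    (((Commute.one_left _).smul_left b).sub_left (hE.commutes Δ hΔ)) fun x r _ => ?_
  refine (hE.mul_norm_apply_le hΔ (μ := b + r) (fun y hy => ?_) x).trans_eq ?_
  · have hy := mem_Iic.1 (hb hy)
    exact (by linarith : r ≤ b + r - y).trans (le_abs_self _)
  · rw [← norm_neg]
    congr 1
    simp only [sub_apply, smul_apply, one_apply_eq_self, Complex.ofReal_add, add_smul,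
      Complex.coe_smul]
    abel

lemma smul_le_mul (hE : IsSpectralMeasure T E) (hT : IsSelfAdjoint T) (hΔ : MeasurableSet Δ)
    {a : ℝ} (ha : Δ ⊆ Ici a) : a • E Δ ≤ T * E Δ := by
  rw [← sub_nonneg, ← smul_one_mul a, ← sub_mul]
  refine mul_nonneg_of_forall_mul_norm_le (hT.sub (IsSelfAdjoint.smul (.all a) (.one _)))
    (hE.isStarProjection hΔ)
    ((hE.commutes Δ hΔ).sub_left ((Commute.one_left _).smul_left a)) fun x r _ => ?_
  refine (hE.mul_norm_apply_le hΔ (μ := a - r) (fun y hy => ?_) x).trans_eq ?_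
  · have hy := mem_Ici.1 (ha hy)
    exact (by linarith : r ≤ -(a - r - y)).trans (neg_le_abs _)
  · congr 1
    simp only [sub_apply, smul_apply, one_apply_eq_self, Complex.ofReal_sub, sub_smul,
      Complex.coe_smul]
    abel

lemma hasSum_iUnion {ι : Type*} [Countable ι] (hE : IsSpectralMeasure T E) {D : ι → Set ℝ}
    (hD : ∀ i, MeasurableSet (D i)) (hdisj : Pairwise (Function.onFun Disjoint D)) (x : H) :
    HasSum (fun i => E (D i) x) (E (⋃ i, D i) x) := by
  obtain ⟨e, he⟩ := exists_injective_nat ι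
  rw [← hasSum_extend_zero he]
  convert! hE.countably_additive (Function.extend e D fun _ => ∅) (fun n => ?_)
    (hdisj.disjoint_extend_bot (he.factorsThrough _)) x
  · simp only [Pi.zero_def, Function.apply_extend fun S => E S x, Function.comp_def, hE.map_empty,
      zero_apply]
  · exact (iSup_extend_bot he _).symm
  · simp [Function.apply_extend MeasurableSet, Function.comp_def, hD]

lemma sum_map_eq_of_iUnion_eq {ι : Type*} [Countable ι] (hE : IsSpectralMeasure T E)
    {D : ι → Set ℝ} (hD : ∀ i, MeasurableSet (D i)) (hdisj : Pairwise (Function.onFun Disjoint D))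
    {t : Finset ι} (ht : ∀ i ∉ t, E (D i) = 0) : ∑ i ∈ t, E (D i) = E (⋃ i, D i) := by
  ext x
  rw [sum_apply]
  refine (hasSum_sum_of_ne_finset_zero fun i hi => ?_).unique (hE.hasSum_iUnion hD hdisj x)
  rw [ht i hi, zero_apply]

lemma orthogonalIdempotents {ι : Type*} (hE : IsSpectralMeasure T E) {D : ι → Set ℝ}
    (hD : ∀ i, MeasurableSet (D i)) (hdisj : Pairwise (Function.onFun Disjoint D)) :
    OrthogonalIdempotents fun i => E (D i) where
  idem i := (hE.isStarProjection (hD i)).isIdempotentElem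
  ortho i j hij := by
    change E (D i) * E (D j) = 0
    rw [hE.map_inter _ _ (hD i) (hD j), (hdisj hij).inter_eq, hE.map_empty]

lemma finite_setOf_map_inter_Ico_ne_zero (hE : IsSpectralMeasure T E) (hS : MeasurableSet S)
    {δ : ℝ} (hδ : 0 < δ) : {n : ℤ | E (S ∩ Ico (n • δ) ((n + 1) • δ)) ≠ 0}.Finite := by
  refine (finite_Icc ⌊-(‖T‖ + 1) / δ⌋ ⌊(‖T‖ + 1) / δ⌋).subset fun n hn => ?_
  obtain ⟨y, ⟨-, hy⟩, hyT⟩ := hE.exists_mem_abs_lt (hS.inter measurableSet_Ico) hn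
    (lt_add_one ‖T‖)
  have hn : ⌊y / δ⌋ = n := by
    rw [Int.floor_eq_iff, le_div_iff₀ hδ, div_lt_iff₀ hδ]
    simpa [zsmul_eq_mul] using hy
  obtain ⟨hlo, hhi⟩ := abs_lt.1 hyT
  rw [← hn]
  exact ⟨by gcongr, by gcongr⟩

lemma exists_norm_mul_sub_sum_smul_le (hE : IsSpectralMeasure T E) (hT : IsSelfAdjoint T)
    (hS : MeasurableSet S) {δ : ℝ} (hδ : 0 < δ) :
    ∃ (t : Finset ℤ) (P : ℤ → H →L[ℂ] H) (a : ℤ → ℝ), OrthogonalIdempotents P ∧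
      (∀ i, IsSelfAdjoint (P i)) ∧ (∀ i ∈ t, a i ∈ S) ∧ ∑ i ∈ t, P i = E S ∧
      ‖T * E S - ∑ i ∈ t, (a i : ℂ) • P i‖ ≤ δ := by
  set D : ℤ → Set ℝ := fun n => S ∩ Ico (n • δ) ((n + 1) • δ) with hD
  have hD_meas (n : ℤ) : MeasurableSet (D n) := hS.inter measurableSet_Ico
  have hD_disj : Pairwise (Function.onFun Disjoint D) := fun m n hmn =>
    (pairwise_disjoint_Ico_zsmul δ hmn).mono inter_subset_right inter_subset_right
  have hD_union : ⋃ n, D n = S := by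
    rw [hD, ← inter_iUnion, iUnion_Ico_zsmul hδ, inter_univ]
  have hfin := hE.finite_setOf_map_inter_Ico_ne_zero hS hδ
  have hne (n : ℤ) (hn : E (D n) ≠ 0) : (D n).Nonempty := by
    contrapose! hn
    rw [hn, hE.map_empty]
  choose! a ha using hne
  have hP := hE.orthogonalIdempotents hD_meas hD_disj
  have hP_sa (n : ℤ) := hE.isSelfAdjoint _ (hD_meas n)
  have hsum : ∑ n ∈ hfin.toFinset, E (D n) = E S := by
    rw [hE.sum_map_eq_of_iUnion_eq hD_meas hD_disj (by simp [D]), hD_union]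
  have ha_mem : ∀ n ∈ hfin.toFinset, a n ∈ D n := fun n hn => ha n (hfin.mem_toFinset.1 hn)
  refine ⟨hfin.toFinset, fun n => E (D n), a, hP, hP_sa, fun n hn => (ha_mem n hn).1, hsum, ?_⟩
  simp only [Complex.coe_smul]
  rw [← hsum, Finset.mul_sum, ← Finset.sum_sub_distrib]
  have hP_nonneg (n : ℤ) : 0 ≤ E (D n) := (hE.isStarProjection (hD_meas n)).nonneg
  refine norm_sum_le_of_orthogonalIdempotents hP hP_sa hδ.le (fun n hn => ?_) fun n hn => ?_
  · have hlo := hE.smul_le_mul hT (hD_meas n) fun y hy => hy.2.1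
    refine le_sub_iff_add_le.2 ?_
    rw [← neg_smul, ← add_smul]
    refine (smul_le_smul_of_nonneg_right ?_ (hP_nonneg n)).trans hlo
    have hn := (ha_mem n hn).2.2.le
    rw [add_smul, one_smul] at hn
    linarith
  · rw [sub_le_iff_le_add, ← add_smul]
    refine (hE.mul_le_smul hT (hD_meas n) fun y hy => hy.2.2.le).trans
      (smul_le_smul_of_nonneg_right ?_ (hP_nonneg n))
    rw [add_smul, one_smul, add_comm]
    gcongr
    exact (ha_mem n hn).2.1

end IsSpectralMeasure

section SpectralGap

variable {H K : Type*} [NormedAddCommGroup H] [InnerProductSpace ℂ H]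
  [NormedAddCommGroup K] [InnerProductSpace ℂ K] {A : H →L[ℂ] H} {B : K →L[ℂ] K}

lemma norm_comp_comp_sub_comp_comp_le {E A' : H →L[ℂ] H} {F B' : K →L[ℂ] K} {δ : ℝ}
    (hAE : Commute A E) (hE : ‖E‖ ≤ 1) (hF : ‖F‖ ≤ 1)
    (hA' : ‖A * E - A'‖ ≤ δ) (hB' : ‖B * F - B'‖ ≤ δ) (X : K →L[ℂ] H) :
    ‖A' ∘L X ∘L F - E ∘L X ∘L B'‖ ≤ ‖A ∘L X - X ∘L B‖ + 2 * δ * ‖X‖ := by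
  have hδ : 0 ≤ δ := (norm_nonneg _).trans hA'
  have hsplit : A' ∘L X ∘L F - E ∘L X ∘L B' = E ∘L (A ∘L X - X ∘L B) ∘L F -
      (A * E - A') ∘L X ∘L F + E ∘L X ∘L (B * F - B') := by
    rw [hAE.eq]
    simp only [ContinuousLinearMap.mul_def, ContinuousLinearMap.comp_sub,
      ContinuousLinearMap.sub_comp, ContinuousLinearMap.comp_assoc]
    abel
  have hA_err : ‖(A * E - A') ∘L X ∘L F‖ ≤ δ * ‖X‖ :=
    calc _ ≤ ‖A * E - A'‖ * (‖X‖ * ‖F‖) :=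
          (ContinuousLinearMap.opNorm_comp_le _ _).trans (by gcongr; exact X.opNorm_comp_le F)
      _ ≤ δ * (‖X‖ * 1) := by gcongr
      _ = δ * ‖X‖ := by ring
  have hB_err : ‖E ∘L X ∘L (B * F - B')‖ ≤ δ * ‖X‖ :=
    calc _ ≤ ‖E‖ * (‖X‖ * ‖B * F - B'‖) :=
          (ContinuousLinearMap.opNorm_comp_le _ _).trans (by gcongr; exact X.opNorm_comp_le _)
      _ ≤ 1 * (‖X‖ * δ) := by gcongr
      _ = δ * ‖X‖ := by ring
  rw [hsplit]
  linarith [norm_add_le (E ∘L (A ∘L X - X ∘L B) ∘L F - (A * E - A') ∘L X ∘L F)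
    (E ∘L X ∘L (B * F - B')), norm_sub_le (E ∘L (A ∘L X - X ∘L B) ∘L F)
    ((A * E - A') ∘L X ∘L F), norm_comp_comp_le_of_norm_le_one hE hF (A ∘L X - X ∘L B)]

variable [CompleteSpace H] [CompleteSpace K] {EA : Set ℝ → H →L[ℂ] H} {EB : Set ℝ → K →L[ℂ] K}
  {σ Δ : Set ℝ}

lemma mul_norm_comp_comp_le_of_forall_le_abs_sub (hA : IsSelfAdjoint A) (hB : IsSelfAdjoint B)
    (hσ : MeasurableSet σ) (hΔ : MeasurableSet Δ) (hEA : IsSpectralMeasure A EA)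
    (hEB : IsSpectralMeasure B EB) {d : ℝ} (hd : 0 < d) (hσΔ : ∀ a ∈ σ, ∀ b ∈ Δ, d ≤ |a - b|)
    (X : K →L[ℂ] H) : d * ‖EA σ ∘L X ∘L EB Δ‖ ≤ π / 2 * ‖A ∘L X - X ∘L B‖ := by
  have happrox (δ : ℝ) (hδ : 0 < δ) :
      d * ‖EA σ ∘L X ∘L EB Δ‖ ≤ π / 2 * (‖A ∘L X - X ∘L B‖ + 2 * δ * ‖X‖) := by
    obtain ⟨t, P, a, hP, hP_sa, ha, hP_sum, hA_approx⟩ :=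
      hEA.exists_norm_mul_sub_sum_smul_le hA hσ hδ
    obtain ⟨t', Q, b, hQ, hQ_sa, hb, hQ_sum, hB_approx⟩ :=
      hEB.exists_norm_mul_sub_sum_smul_le hB hΔ hδ
    have hstep := mul_norm_comp_comp_le_of_orthogonalIdempotents hP hP_sa hQ hQ_sa hd
      (fun i hi j hj => hσΔ _ (ha i hi) _ (hb j hj)) X
    rw [hP_sum, hQ_sum] at hstep
    refine hstep.trans ?_
    gcongr
    exact norm_comp_comp_sub_comp_comp_le (hEA.commutes σ hσ) (hEA.isStarProjection hσ).norm_le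
      (hEB.isStarProjection hΔ).norm_le hA_approx hB_approx X
  have hlim : Tendsto (fun δ : ℝ => π / 2 * (‖A ∘L X - X ∘L B‖ + 2 * δ * ‖X‖)) (𝓝[>] 0)
      (𝓝 (π / 2 * ‖A ∘L X - X ∘L B‖)) :=
    tendsto_nhdsWithin_of_tendsto_nhds (Continuous.tendsto' (by fun_prop) _ _ (by ring))
  exact ge_of_tendsto hlim (eventually_nhdsWithin_of_forall happrox)

theorem dist_mul_norm_proj_mul_proj_le_pi_div_two_general (hA : IsSelfAdjoint A)
    (hB : IsSelfAdjoint B) (hσ : MeasurableSet σ) (hΔ : MeasurableSet Δ)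
    (hEA : IsSpectralMeasure A EA) (hEB : IsSpectralMeasure B EB) (X : K →L[ℂ] H) :
    sInf (Set.image2 dist σ Δ) * ‖EA σ ∘L X ∘L EB Δ‖ ≤ π / 2 * ‖A ∘L X - X ∘L B‖ := by
  rcases le_or_gt (sInf (Set.image2 dist σ Δ)) 0 with hd | hd
  · exact (mul_nonpos_of_nonpos_of_nonneg hd (norm_nonneg _)).trans (by positivity)
  · have hbdd : BddBelow (Set.image2 dist σ Δ) :=
      ⟨0, forall_mem_image2.2 fun _ _ _ _ => dist_nonneg⟩
    exact mul_norm_comp_comp_le_of_forall_le_abs_sub hA hB hσ hΔ hEA hEB hd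
      (fun a ha b hb => csInf_le hbdd (mem_image2_of_mem ha hb)) X

end SpectralGap

/-- **Proposition (Bhatia–Davis–Koosis / Bhatia–Davis–McIntosh / McEachin).**
For bounded self-adjoint operators `A`, `B` and Borel sets `σ`, `Δ` on the real axis,
`dist(σ, Δ) ‖E_A(σ) E_B(Δ)‖ ≤ (π/2) ‖A − B‖`. -/
theorem dist_mul_norm_proj_mul_proj_le_pi_div_two
    {H : Type*} [NormedAddCommGroup H] [InnerProductSpace ℂ H] [CompleteSpace H]
    (A B : H →L[ℂ] H) (hA : IsSelfAdjoint A) (hB : IsSelfAdjoint B)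
    (σ Δ : Set ℝ) (hσ : MeasurableSet σ) (hΔ : MeasurableSet Δ)
    (EA EB : Set ℝ → H →L[ℂ] H) (hEA : IsSpectralMeasure A EA) (hEB : IsSpectralMeasure B EB) :
    sInf (Set.image2 dist σ Δ) * ‖EA σ * EB Δ‖ ≤ π / 2 * ‖A - B‖ := by
  simpa only [ContinuousLinearMap.mul_def, ContinuousLinearMap.id_comp,
    ContinuousLinearMap.comp_id] using
    dist_mul_norm_proj_mul_proj_le_pi_div_two_general hA hB hσ hΔ hEA hEB (.id ℂ H)
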